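/- If G is a 3-tree on 4 vertices, then τ(G) = 2 and ν(G) = 1; if G is a 3-tree on 5 vertices, then τ(G) = 3 and ν(G) = 2; and if G is a 3-tree on 6 vertices, then τ(G) ≤ 4 and ν(G) = 3. In particular, every 3-tree G with at most 6 vertices satisfies τ(G) ≤ (9/5)·ν(G) + 1/5. -/

import Mathlib

open SimpleGraph

variable {V : Type*}

/-- A triangle transversal of `G`: a set of edges of `G` meeting every triangle of `G`
(so that its removal leaves a triangle-free graph). -/
def IsTriangleTransversal (G : SimpleGraph V) (X : Finset (Sym2 V)) : Prop :=
  ↑X ⊆ G.edgeSet ∧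
    ∀ t : Finset V, G.IsNClique 3 t → ∃ e ∈ X, ∀ v ∈ e, v ∈ t

/-- A triangle packing of `G`: a set of pairwise edge-disjoint triangles of `G`. -/
def IsTrianglePacking (G : SimpleGraph V) (Y : Finset (Finset V)) : Prop :=
  (∀ t ∈ Y, G.IsNClique 3 t) ∧
    ∀ s ∈ Y, ∀ t ∈ Y, s ≠ t →
      ∀ e ∈ G.edgeSet, ¬ ((∀ v ∈ e, v ∈ s) ∧ (∀ v ∈ e, v ∈ t))

/-- `tau G` is the minimum size of a triangle transversal of `G`. -/
noncomputable def tau (G : SimpleGraph V) : ℕ :=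
  sInf {n | ∃ X : Finset (Sym2 V), IsTriangleTransversal G X ∧ X.card = n}

/-- `nu G` is the maximum size of a triangle packing of `G`. -/
noncomputable def nu (G : SimpleGraph V) : ℕ :=
  sSup {n | ∃ Y : Finset (Finset V), IsTrianglePacking G Y ∧ Y.card = n}

/-- `G` is a 3-tree: it can be built from `K₃` by repeatedly adding a new vertex adjacent
to the three vertices of an existing triangle.  This is expressed via a construction
ordering `e : Fin (n+3) ≃ V`: the first three vertices form a triangle, and every later
vertex is adjacent, among earlier vertices, to exactly the vertices of a triangle. -/
def Is3Tree (G : SimpleGraph V) : Prop :=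
  ∃ (n : ℕ) (e : Fin (n + 3) ≃ V),
    (∀ i j : Fin (n + 3), (i : ℕ) < 3 → (j : ℕ) < 3 → i ≠ j → G.Adj (e i) (e j)) ∧
    ∀ j : Fin (n + 3), 3 ≤ (j : ℕ) →
      ∃ s : Finset V, G.IsNClique 3 s ∧
        (∀ v ∈ s, ∃ i : Fin (n + 3), (i : ℕ) < (j : ℕ) ∧ e i = v) ∧
        ∀ i : Fin (n + 3), (i : ℕ) < (j : ℕ) → (G.Adj (e j) (e i) ↔ e i ∈ s)

/-- `Is3TreeOn G n S`: the graph induced by `G` on `S` is obtained from a triangle by `n` successive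
additions of a vertex adjacent to the vertices of a triangle. -/
inductive Is3TreeOn [DecidableEq V] (G : SimpleGraph V) : ℕ → Finset V → Prop
  | base {S : Finset V} (hS : G.IsNClique 3 S) : Is3TreeOn G 0 S
  | step {n : ℕ} {S s : Finset V} {v : V} (hS : Is3TreeOn G n S) (hv : v ∉ S)
      (hs : G.IsNClique 3 s) (hsS : s ⊆ S) (hadj : ∀ u ∈ S, G.Adj v u ↔ u ∈ s) :
      Is3TreeOn G (n + 1) (insert v S)

theorem Is3Tree.exists_is3TreeOn_univ [Fintype V] [DecidableEq V] {G : SimpleGraph V}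
    (h : Is3Tree G) : ∃ n, Is3TreeOn G n Finset.univ := by
  obtain ⟨n, e, h0, hstep⟩ := h
  have key : ∀ k ≤ n, Is3TreeOn G k
      ((Finset.univ.filter fun i : Fin (n + 3) => (i : ℕ) < k + 3).image e) := by
    intro k
    induction k with
    | zero =>
      intro _
      refine .base ⟨?_, ?_⟩
      · intro a ha b hb hab
        simp only [Finset.coe_image, Finset.coe_filter, Finset.mem_univ, true_and,
          Set.mem_image, Set.mem_ofPred_eq] at ha hb
        obtain ⟨i, hi, rfl⟩ := ha
        obtain ⟨j, hj, rfl⟩ := hb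
        exact h0 i j (by omega) (by omega) fun hij => hab (by rw [hij])
      · rw [Finset.card_image_of_injective _ e.injective, Fin.card_filter_val_lt]
        omega
    | succ k ih =>
      intro hk
      obtain ⟨s, hs, hsub, hadj⟩ := hstep ⟨k + 3, by omega⟩ (by simp)
      have hins : (Finset.univ.filter fun i : Fin (n + 3) => (i : ℕ) < k + 1 + 3).image e =
          insert (e ⟨k + 3, by omega⟩)
            ((Finset.univ.filter fun i : Fin (n + 3) => (i : ℕ) < k + 3).image e) := by
        rw [← Finset.image_insert]
        congr 1
        ext i
        simp only [Finset.mem_filter, Finset.mem_univ, true_and, Finset.mem_insert, Fin.ext_iff]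
        omega
      rw [hins]
      refine .step (ih (by omega)) ?_ hs ?_ ?_
      · simp
      · intro v hv
        obtain ⟨i, hi, rfl⟩ := hsub v hv
        exact Finset.mem_image_of_mem _ (by simpa using hi)
      · intro u hu
        simp only [Finset.mem_image, Finset.mem_filter, Finset.mem_univ, true_and] at hu
        obtain ⟨i, hi, rfl⟩ := hu
        exact hadj i hi
  refine ⟨n, ?_⟩
  convert key n le_rfl
  ext v
  simp only [Finset.mem_univ, Finset.mem_image, Finset.mem_filter, true_and, true_iff]
  exact ⟨e.symm v, (e.symm v).isLt, by simp⟩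

namespace Is3TreeOn

variable [DecidableEq V] {G : SimpleGraph V} {n : ℕ} {S : Finset V}

theorem card_eq (h : Is3TreeOn G n S) : S.card = n + 3 := by
  induction h with
  | base hS => exact hS.card_eq
  | step _ hv _ _ _ ih => rw [Finset.card_insert_of_notMem hv, ih]

theorem isNClique_three (h : Is3TreeOn G 0 S) : G.IsNClique 3 S := by
  cases h with
  | base hS => exact hS

theorem isNClique_four (h : Is3TreeOn G 1 S) : G.IsNClique 4 S := by
  cases h with
  | step hS hv hs hsS hadj =>
    have hS' := hS.isNClique_three
    obtain rfl := Finset.eq_of_subset_of_card_le hsS (by rw [hs.card_eq, hS'.card_eq])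
    exact hS'.insert fun b hb => (hadj b hb).2 hb

/-- A 3-tree on five vertices is `K₅` minus the edge `pq`. -/
theorem exists_five (h : Is3TreeOn G 2 S) : ∃ x y z p q,
    S = {x, y, z, p, q} ∧ [x, y, z, p, q].Nodup ∧ ¬ G.Adj p q ∧
    G.Adj x y ∧ G.Adj y z ∧ G.Adj x z ∧ G.Adj p x ∧ G.Adj p y ∧ G.Adj p z ∧
    G.Adj q x ∧ G.Adj q y ∧ G.Adj q z := by
  cases h with
  | @step _ T s q hT hq hs hsT hadj =>
    have hT' := hT.isNClique_four
    obtain ⟨p, hp⟩ : ∃ p, T \ s = {p} := by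
      rw [← Finset.card_eq_one, Finset.card_sdiff_of_subset hsT, hs.card_eq, hT'.card_eq]
    have hpT : p ∈ T ∧ p ∉ s := by
      rw [← Finset.mem_sdiff, hp]; simp
    have hTs : T = insert p s := by
      rw [Finset.insert_eq, ← hp, Finset.sdiff_union_of_subset hsT]
    obtain ⟨x, y, z, hxy, hxz, hyz, rfl⟩ := Finset.card_eq_three.1 hs.card_eq
    have hc := hT'.isClique
    subst hTs
    have hc' : ∀ a ∈ insert p ({x, y, z} : Finset V), ∀ b ∈ insert p ({x, y, z} : Finset V), a ≠ b →
        G.Adj a b := fun a ha b hb hab => hc (by exact_mod_cast ha) (by exact_mod_cast hb) hab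
    have hpq := hadj p (by simp)
    refine ⟨x, y, z, p, q, ?_, ?_, ?_, ?_⟩
    · ext; simp; tauto
    · simp at hq hpT ⊢; grind
    · rw [G.adj_comm, hpq]; exact hpT.2
    · simp at hq hpT
      refine ⟨hc' _ ?_ _ ?_ ?_, hc' _ ?_ _ ?_ ?_, hc' _ ?_ _ ?_ ?_, hc' _ ?_ _ ?_ ?_,
        hc' _ ?_ _ ?_ ?_, hc' _ ?_ _ ?_ ?_, (hadj _ ?_).2 ?_, (hadj _ ?_).2 ?_,
        (hadj _ ?_).2 ?_⟩ <;> simp <;> tauto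

end Is3TreeOn

section Packing

variable {G : SimpleGraph V}

theorem IsTrianglePacking.eq_of_mem_of_mem {Y : Finset (Finset V)} (hY : IsTrianglePacking G Y)
    {s t : Finset V} (hs : s ∈ Y) (ht : t ∈ Y) {a b : V} (hab : a ≠ b)
    (has : a ∈ s) (hbs : b ∈ s) (hat : a ∈ t) (hbt : b ∈ t) : s = t := by
  by_contra hst
  refine hY.2 s hs t ht hst s(a, b) ((hY.1 s hs).isClique has hbs hab) ⟨?_, ?_⟩ <;>
    simp [*]

theorem IsTrianglePacking.mono {Y Z : Finset (Finset V)} (hY : IsTrianglePacking G Y)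
    (hZ : Z ⊆ Y) : IsTrianglePacking G Z :=
  ⟨fun t ht => hY.1 t (hZ ht), fun s hs t ht => hY.2 s (hZ hs) t (hZ ht)⟩

theorem isTrianglePacking_of_inter [DecidableEq V] {Y : Finset (Finset V)}
    (hY : ∀ t ∈ Y, G.IsNClique 3 t)
    (hinter : ∀ s ∈ Y, ∀ t ∈ Y, s ≠ t → ∀ a ∈ s ∩ t, ∀ b ∈ s ∩ t, a = b) :
    IsTrianglePacking G Y := by
  refine ⟨hY, fun s hs t ht hst e he ⟨hes, het⟩ => ?_⟩
  induction e with
  | _ a b =>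
    refine G.ne_of_adj he (hinter s hs t ht hst a ?_ b ?_) <;> simp_all

theorem IsTrianglePacking.le_nu [Finite V] {Y : Finset (Finset V)} (hY : IsTrianglePacking G Y) :
    Y.card ≤ nu G := by
  cases nonempty_fintype V
  refine le_csSup ⟨Fintype.card (Finset V), ?_⟩ ⟨Y, hY, rfl⟩
  rintro _ ⟨Z, -, rfl⟩
  exact Finset.card_le_univ Z

theorem nu_le {k : ℕ} (h : ∀ Y, IsTrianglePacking G Y → Y.card ≤ k) : nu G ≤ k := by
  refine csSup_le ⟨0, ∅, ⟨by simp, by simp⟩, rfl⟩ ?_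
  rintro _ ⟨Y, hY, rfl⟩
  exact h Y hY

theorem exists_ne_mem_inter_of_card_lt [DecidableEq V] {S s t : Finset V} (hs : s ⊆ S) (ht : t ⊆ S)
    (h : S.card + 1 < s.card + t.card) : ∃ a ∈ s ∩ t, ∃ b ∈ s ∩ t, a ≠ b := by
  have h1 := Finset.card_union_add_card_inter s t
  have h2 := Finset.card_le_card (Finset.union_subset hs ht)
  obtain ⟨a, ha, b, hb, hab⟩ := Finset.one_lt_card.1 (show 1 < (s ∩ t).card by omega)
  exact ⟨a, ha, b, hb, hab⟩

theorem IsTrianglePacking.card_le_one [DecidableEq V] {Y : Finset (Finset V)} {S : Finset V}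
    (hY : IsTrianglePacking G Y) (hS : S.card ≤ 4) (hYS : ∀ t ∈ Y, t ⊆ S) : Y.card ≤ 1 := by
  refine Finset.card_le_one.2 fun s hs t ht => ?_
  obtain ⟨a, ha, b, hb, hab⟩ := exists_ne_mem_inter_of_card_lt (hYS s hs) (hYS t ht)
    (by rw [(hY.1 s hs).card_eq, (hY.1 t ht).card_eq]; omega)
  rw [Finset.mem_inter] at ha hb
  exact hY.eq_of_mem_of_mem hs ht hab ha.1 hb.1 ha.2 hb.2

theorem IsTrianglePacking.card_le_of_is3TreeOn [DecidableEq V] {n : ℕ} {S : Finset V}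
    (hS : Is3TreeOn G (n + 1) S) {Y : Finset (Finset V)} (hY : IsTrianglePacking G Y)
    (hYS : ∀ t ∈ Y, t ⊆ S) : Y.card ≤ n + 1 := by
  induction n generalizing S Y with
  | zero => exact hY.card_le_one hS.card_eq.le hYS
  | succ n ih =>
    cases hS with
    | @step _ T N v hT hv hN hNT hadj =>
      have hlink : ∀ t ∈ Y, v ∈ t → t.erase v ⊆ N := by
        intro t ht hvt u hu
        have hut := Finset.mem_of_mem_erase hu
        have huv := Finset.ne_of_mem_erase hu
        have huT : u ∈ T := Finset.mem_of_mem_insert_of_ne (hYS t ht hut) huv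
        exact (hadj u huT).1 ((hY.1 t ht).isClique hvt hut huv.symm)
      have h1 : (Y.filter (v ∈ ·)).card ≤ 1 := by
        refine Finset.card_le_one.2 fun s hs t ht => ?_
        rw [Finset.mem_filter] at hs ht
        have hcs := Finset.card_erase_of_mem hs.2
        have hct := Finset.card_erase_of_mem ht.2
        rw [(hY.1 s hs.1).card_eq] at hcs
        rw [(hY.1 t ht.1).card_eq] at hct
        have h1 := Finset.card_union_add_card_inter (s.erase v) (t.erase v)
        have h2 := Finset.card_le_card
          (Finset.union_subset (hlink s hs.1 hs.2) (hlink t ht.1 ht.2))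
        rw [hN.card_eq] at h2
        obtain ⟨a, ha⟩ := Finset.card_pos.1
          (show 0 < (s.erase v ∩ t.erase v).card by omega)
        rw [Finset.mem_inter, Finset.mem_erase, Finset.mem_erase] at ha
        exact hY.eq_of_mem_of_mem hs.1 ht.1 ha.1.1 ha.1.2 hs.2 ha.2.2 ht.2
      have h2 : (Y.filter (v ∉ ·)).card ≤ n + 1 := by
        refine ih hT (hY.mono (Finset.filter_subset _ _)) fun t ht => ?_
        rw [Finset.mem_filter] at ht
        exact (Finset.subset_insert_iff_of_notMem ht.2).1 (hYS t ht.1)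
      have h3 := Finset.card_filter_add_card_filter_not (s := Y) (v ∈ ·)
      omega

theorem nu_le_of_is3TreeOn [Fintype V] [DecidableEq V] {n : ℕ}
    (h : Is3TreeOn G (n + 1) Finset.univ) : nu G ≤ n + 1 :=
  nu_le fun _ hY => hY.card_le_of_is3TreeOn h fun t _ => Finset.subset_univ t

end Packing

section Transversal

variable {G : SimpleGraph V}

theorem IsTriangleTransversal.tau_le {X : Finset (Sym2 V)} (hX : IsTriangleTransversal G X) :
    tau G ≤ X.card :=
  Nat.sInf_le ⟨X, hX, rfl⟩

theorem IsTriangleTransversal.tau_mem {X : Finset (Sym2 V)} (hX : IsTriangleTransversal G X) :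
    ∃ Z, IsTriangleTransversal G Z ∧ Z.card = tau G :=
  Nat.sInf_mem (s := {n | ∃ Z : Finset (Sym2 V), IsTriangleTransversal G Z ∧ Z.card = n})
    ⟨_, X, hX, rfl⟩

/-- A triangle transversal with at most two edges has an edge, inside the clique `{a, b, c, p}`,
at the vertex `p`. -/
theorem IsTriangleTransversal.exists_mem_of_card_lt_three [DecidableEq V] {X : Finset (Sym2 V)}
    (hX : IsTriangleTransversal G X) (hcard : X.card < 3) {a b c p : V} (hab : G.Adj a b)
    (hac : G.Adj a c) (hbc : G.Adj b c) (hpa : G.Adj p a) (hpb : G.Adj p b) (hpc : G.Adj p c) :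
    ∃ e ∈ X, p ∈ e ∧ ∀ v ∈ e, v ∈ ({p, a, b, c} : Finset V) := by
  by_contra! hno
  have opposite : ∀ u w, G.Adj u w → G.Adj p u → G.Adj p w →
      ({p, u, w} : Finset V) ⊆ {p, a, b, c} → s(u, w) ∈ X := by
    intro u w huw hpu hpw hsub
    obtain ⟨e, he, hemem⟩ := hX.2 {p, u, w} (is3Clique_triple_iff.2 ⟨hpu, hpw, huw⟩)
    have hpe : p ∉ e := fun hp => by
      obtain ⟨v, hv, hv'⟩ := hno e he hp
      exact hv' (hsub (hemem v hv))
    have hadj : e ∈ G.edgeSet := hX.1 he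
    induction e with
    | _ i j =>
      have hij : i ≠ j := G.ne_of_adj hadj
      simp only [Sym2.mem_iff, Finset.mem_insert, Finset.mem_singleton] at hemem hpe
      have hi := hemem i (.inl rfl)
      have hj := hemem j (.inr rfl)
      have : s(u, w) = s(i, j) := by rw [Sym2.eq_iff]; grind
      rwa [this]
  have h1 := opposite a b hab hpa hpb (by intro v; simp; tauto)
  have h2 := opposite a c hac hpa hpc (by intro v; simp; tauto)
  have h3 := opposite b c hbc hpb hpc (by intro v; simp; tauto)
  have hthree : ({s(a, b), s(a, c), s(b, c)} : Finset (Sym2 V)).card = 3 := by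
    have := hab.ne; have := hac.ne; have := hbc.ne
    refine Finset.card_eq_three.2 ⟨_, _, _, ?_, ?_, ?_, rfl⟩ <;> simp <;> grind
  have := Finset.card_le_card (show ({s(a, b), s(a, c), s(b, c)} : Finset (Sym2 V)) ⊆ X by
    intro e; simp; rintro (rfl | rfl | rfl) <;> assumption)
  omega

theorem IsTriangleTransversal.two_le_card [DecidableEq V] {X : Finset (Sym2 V)}
    (hX : IsTriangleTransversal G X) {a b c p : V} (hab : G.Adj a b)
    (hac : G.Adj a c) (hbc : G.Adj b c) (hpa : G.Adj p a) (hpb : G.Adj p b) (hpc : G.Adj p c) :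
    2 ≤ X.card := by
  by_contra! hcard
  obtain ⟨e, he, hpe, -⟩ :=
    hX.exists_mem_of_card_lt_three (by omega) hab hac hbc hpa hpb hpc
  obtain ⟨f, hf, hfmem⟩ := hX.2 {a, b, c} (is3Clique_triple_iff.2 ⟨hab, hac, hbc⟩)
  obtain rfl := Finset.card_le_one.1 (Nat.le_of_lt_succ hcard) e he f hf
  have := hfmem p hpe
  simp [hpa.ne, hpb.ne, hpc.ne] at this

theorem IsTriangleTransversal.three_le_card [DecidableEq V] {X : Finset (Sym2 V)}
    (hX : IsTriangleTransversal G X) {x y z p q : V} (hpq : p ≠ q) (hxy : G.Adj x y)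
    (hxz : G.Adj x z) (hyz : G.Adj y z) (hpx : G.Adj p x) (hpy : G.Adj p y) (hpz : G.Adj p z)
    (hqx : G.Adj q x) (hqy : G.Adj q y) (hqz : G.Adj q z) :
    3 ≤ X.card := by
  by_contra! hcard
  obtain ⟨e, he, hpe, hemem⟩ := hX.exists_mem_of_card_lt_three hcard hxy hxz hyz hpx hpy hpz
  obtain ⟨f, hf, hqf, -⟩ := hX.exists_mem_of_card_lt_three hcard hxy hxz hyz hqx hqy hqz
  obtain ⟨g, hg, hgmem⟩ := hX.2 {x, y, z} (is3Clique_triple_iff.2 ⟨hxy, hxz, hyz⟩)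
  have hpg : p ∉ g := fun h => by simpa [hpx.ne, hpy.ne, hpz.ne] using hgmem p h
  have hqg : q ∉ g := fun h => by simpa [hqx.ne, hqy.ne, hqz.ne] using hgmem q h
  have hqe : q ∉ e := fun h => by
    simpa [hqx.ne, hqy.ne, hqz.ne, hpq.symm] using hemem q h
  have hef : e ≠ f := by rintro rfl; exact hqe hqf
  have heg : e ≠ g := by rintro rfl; exact hpg hpe
  have hfg : f ≠ g := by rintro rfl; exact hqg hqf
  have := Finset.card_le_card (show ({e, f, g} : Finset (Sym2 V)) ⊆ X by
    intro e; simp; rintro (rfl | rfl | rfl) <;> assumption)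
  rw [Finset.card_eq_three.2 ⟨e, f, g, hef, heg, hfg, rfl⟩] at this
  omega

end Transversal

section SmallCases

variable [Fintype V] [DecidableEq V] {G : SimpleGraph V}

theorem tau_nu_of_is3TreeOn_zero (h : Is3TreeOn G 0 Finset.univ) : tau G ≤ 1 ∧ 1 ≤ nu G := by
  have hc := h.isNClique_three
  constructor
  · obtain ⟨x, y, z, hxy, hxz, hyz, huniv⟩ := is3Clique_iff.1 hc
    have hX : IsTriangleTransversal G {s(x, y)} := by
      refine ⟨by simpa using hxy, fun t ht => ⟨s(x, y), by simp, fun v _ => ?_⟩⟩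
      rw [Finset.eq_of_subset_of_card_le (Finset.subset_univ t)
        (by rw [hc.card_eq, ht.card_eq])]
      exact Finset.mem_univ v
    simpa using hX.tau_le
  · have hY : IsTrianglePacking G {Finset.univ} := by
      refine isTrianglePacking_of_inter (by simpa using hc) ?_
      intro s hs t ht hst
      rw [Finset.mem_singleton] at hs ht
      exact absurd (hs.trans ht.symm) hst
    simpa using hY.le_nu

theorem tau_nu_of_is3TreeOn_one (h : Is3TreeOn G 1 Finset.univ) : tau G = 2 ∧ nu G = 1 := by
  obtain ⟨a, b, c, d, hab, hac, had, hbc, hbd, hcd, huniv⟩ :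
      ∃ a b c d, G.Adj a b ∧ G.Adj a c ∧ G.Adj a d ∧ G.Adj b c ∧ G.Adj b d ∧ G.Adj c d ∧
        Finset.univ = {a, b, c, d} := by
    have hc := h.isNClique_four
    obtain ⟨a, b, c, d, hab, hac, had, hbc, hbd, hcd, huniv⟩ := Finset.card_eq_four.1 hc.card_eq
    have hadj : ∀ u w, u ≠ w → G.Adj u w := fun u w => hc.isClique (by simp) (by simp)
    exact ⟨a, b, c, d, hadj _ _ hab, hadj _ _ hac, hadj _ _ had, hadj _ _ hbc, hadj _ _ hbd,
      hadj _ _ hcd, huniv⟩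
  have hX : IsTriangleTransversal G {s(a, b), s(c, d)} := by
    refine ⟨by intro e; simp; rintro (rfl | rfl) <;> assumption, fun t ht => ?_⟩
    obtain ⟨x, y, z, hxy, hxz, hyz, rfl⟩ := is3Clique_iff.1 ht
    have hmem : ∀ v : V, v = a ∨ v = b ∨ v = c ∨ v = d := fun v => by
      simpa [huniv] using Finset.mem_univ v
    have := hxy.ne; have := hxz.ne; have := hyz.ne
    have := hmem x; have := hmem y; have := hmem z
    simp
    grind
  refine ⟨le_antisymm (hX.tau_le.trans Finset.card_le_two) ?_,
    le_antisymm (nu_le_of_is3TreeOn h) ?_⟩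
  · obtain ⟨Z, hZ, hcard⟩ := hX.tau_mem
    exact hcard ▸ hZ.two_le_card hab hac hbc had.symm hbd.symm hcd.symm
  · have hY : IsTrianglePacking G {{a, b, c}} := by
      refine isTrianglePacking_of_inter (by simpa [is3Clique_triple_iff] using ⟨hab, hac, hbc⟩) ?_
      intro s hs t ht hst
      rw [Finset.mem_singleton] at hs ht
      exact absurd (hs.trans ht.symm) hst
    simpa using hY.le_nu

theorem tau_nu_of_is3TreeOn_two (h : Is3TreeOn G 2 Finset.univ) : tau G = 3 ∧ nu G = 2 := by
  obtain ⟨x, y, z, p, q, huniv, hnodup, hpq, hxy, hyz, hxz, hpx, hpy, hpz, hqx, hqy, hqz⟩ :=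
    h.exists_five
  simp only [List.nodup_cons, List.mem_cons, List.not_mem_nil] at hnodup
  have hmem : ∀ v : V, v = x ∨ v = y ∨ v = z ∨ v = p ∨ v = q := fun v => by
    simpa [huniv] using Finset.mem_univ v
  have hX : IsTriangleTransversal G {s(x, y), s(y, z), s(x, z)} := by
    refine ⟨by intro e; simp; rintro (rfl | rfl | rfl) <;> assumption, fun t ht => ?_⟩
    obtain ⟨i, j, k, hij, hik, hjk, rfl⟩ := is3Clique_iff.1 ht
    have := hij.ne; have := hik.ne; have := hjk.ne
    have := hmem i; have := hmem j; have := hmem k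
    have := G.adj_comm p q
    simp
    grind
  refine ⟨le_antisymm (hX.tau_le.trans Finset.card_le_three) ?_,
    le_antisymm (nu_le_of_is3TreeOn h) ?_⟩
  · obtain ⟨Z, hZ, hcard⟩ := hX.tau_mem
    exact hcard ▸ hZ.three_le_card (by grind) hxy hxz hyz hpx hpy hpz hqx hqy hqz
  · have hY : IsTrianglePacking G {{p, x, y}, {q, y, z}} := by
      refine isTrianglePacking_of_inter ?_ ?_
      · simp [is3Clique_triple_iff, *]
      · intro s hs t ht hst a ha b hb
        simp only [Finset.mem_insert, Finset.mem_singleton] at hs ht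
        rcases hs with rfl | rfl <;> rcases ht with rfl | rfl <;>
          first
          | exact absurd rfl hst
          | simp only [Finset.mem_inter, Finset.mem_insert, Finset.mem_singleton] at ha hb
            clear hst hmem
            grind
    refine le_trans (Finset.card_pair ?_).ge hY.le_nu
    intro he
    have : p ∈ ({q, y, z} : Finset V) := he ▸ by simp
    grind

/-- The 3-tree on six vertices in which three vertices are attached to the same triangle. -/
theorem tau_nu_of_three_apexes {x y z p q r : V}
    (hmem : ∀ v, v = x ∨ v = y ∨ v = z ∨ v = p ∨ v = q ∨ v = r)
    (hnodup : [x, y, z, p, q, r].Nodup) (hpq : ¬ G.Adj p q) (hrp : ¬ G.Adj r p)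
    (hrq : ¬ G.Adj r q) (hxy : G.Adj x y) (hyz : G.Adj y z) (hxz : G.Adj x z)
    (hpx : G.Adj p x) (hpy : G.Adj p y) (hqy : G.Adj q y) (hqz : G.Adj q z)
    (hrx : G.Adj r x) (hrz : G.Adj r z) : tau G ≤ 4 ∧ 3 ≤ nu G := by
  simp only [List.nodup_cons, List.mem_cons, List.not_mem_nil] at hnodup
  constructor
  · have hX : IsTriangleTransversal G {s(x, y), s(y, z), s(x, z)} := by
      refine ⟨by intro e; simp; rintro (rfl | rfl | rfl) <;> assumption, fun t ht => ?_⟩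
      obtain ⟨i, j, k, hij, hik, hjk, rfl⟩ := is3Clique_iff.1 ht
      have := hij.ne; have := hik.ne; have := hjk.ne
      have := hmem i; have := hmem j; have := hmem k
      have := G.adj_comm p q; have := G.adj_comm r p; have := G.adj_comm r q
      simp
      grind
    exact hX.tau_le.trans (Finset.card_le_three.trans (by omega))
  · have hY : IsTrianglePacking G {{p, x, y}, {q, y, z}, {r, x, z}} := by
      refine isTrianglePacking_of_inter ?_ ?_
      · simp [is3Clique_triple_iff, *]
      · intro s hs t ht hst a ha b hb
        simp only [Finset.mem_insert, Finset.mem_singleton] at hs ht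
        rcases hs with rfl | rfl | rfl <;> rcases ht with rfl | rfl | rfl <;>
          first
          | exact absurd rfl hst
          | simp only [Finset.mem_inter, Finset.mem_insert, Finset.mem_singleton] at ha hb
            clear hst hmem
            grind
    refine le_trans (Finset.card_eq_three.2 ⟨_, _, _, ?_, ?_, ?_, rfl⟩).ge hY.le_nu
    · exact ne_of_mem_of_not_mem' (a := p) (by simp) (by simp; grind)
    · exact ne_of_mem_of_not_mem' (a := p) (by simp) (by simp; grind)
    · exact ne_of_mem_of_not_mem' (a := q) (by simp) (by simp; grind)

/-- The 3-tree on six vertices in which `r` is attached to a triangle `pxy` through the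
vertex `p`. -/
theorem tau_nu_of_stacked {x y z p q r : V}
    (hmem : ∀ v, v = x ∨ v = y ∨ v = z ∨ v = p ∨ v = q ∨ v = r)
    (hnodup : [x, y, z, p, q, r].Nodup) (hpq : ¬ G.Adj p q) (hrz : ¬ G.Adj r z)
    (hrq : ¬ G.Adj r q) (hxy : G.Adj x y) (hyz : G.Adj y z) (hxz : G.Adj x z)
    (hpx : G.Adj p x) (hpy : G.Adj p y) (hpz : G.Adj p z) (hqx : G.Adj q x) (hqz : G.Adj q z)
    (hrx : G.Adj r x) (hrp : G.Adj r p) : tau G ≤ 4 ∧ 3 ≤ nu G := by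
  simp only [List.nodup_cons, List.mem_cons, List.not_mem_nil] at hnodup
  constructor
  · have hX : IsTriangleTransversal G {s(x, y), s(y, z), s(x, z), s(r, p)} := by
      refine ⟨by intro e; simp; rintro (rfl | rfl | rfl | rfl) <;> assumption, fun t ht => ?_⟩
      obtain ⟨i, j, k, hij, hik, hjk, rfl⟩ := is3Clique_iff.1 ht
      have := hij.ne; have := hik.ne; have := hjk.ne
      have := hmem i; have := hmem j; have := hmem k
      have := G.adj_comm p q; have := G.adj_comm r z; have := G.adj_comm r q
      simp
      grind
    exact hX.tau_le.trans Finset.card_le_four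
  · have hY : IsTrianglePacking G {{r, x, p}, {q, x, z}, {p, y, z}} := by
      refine isTrianglePacking_of_inter ?_ ?_
      · simp [is3Clique_triple_iff, hpx.symm, *]
      · intro s hs t ht hst a ha b hb
        simp only [Finset.mem_insert, Finset.mem_singleton] at hs ht
        rcases hs with rfl | rfl | rfl <;> rcases ht with rfl | rfl | rfl <;>
          first
          | exact absurd rfl hst
          | simp only [Finset.mem_inter, Finset.mem_insert, Finset.mem_singleton] at ha hb
            clear hst hmem
            grind
    refine le_trans (Finset.card_eq_three.2 ⟨_, _, _, ?_, ?_, ?_, rfl⟩).ge hY.le_nu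
    · exact ne_of_mem_of_not_mem' (a := r) (by simp) (by simp; grind)
    · exact ne_of_mem_of_not_mem' (a := r) (by simp) (by simp; grind)
    · exact ne_of_mem_of_not_mem' (a := q) (by simp) (by simp; grind)

theorem tau_nu_of_is3TreeOn_three (h : Is3TreeOn G 3 Finset.univ) : tau G ≤ 4 ∧ nu G = 3 := by
  suffices hs : tau G ≤ 4 ∧ 3 ≤ nu G from ⟨hs.1, le_antisymm (nu_le_of_is3TreeOn h) hs.2⟩
  generalize huniv : (Finset.univ : Finset V) = U at h
  cases h with
  | @step _ T N r hT hr hN hNT hadj =>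
    obtain ⟨x, y, z, p, q, rfl, hnodup, hpq, hxy, hyz, hxz, hpx, hpy, hpz, hqx, hqy, hqz⟩ :=
      hT.exists_five
    have hmem : ∀ v : V, v = x ∨ v = y ∨ v = z ∨ v = p ∨ v = q ∨ v = r := fun v => by
      have := Finset.mem_univ v
      rw [huniv] at this
      simp at this
      tauto
    simp only [Finset.mem_insert, Finset.mem_singleton] at hr
    simp only [List.nodup_cons, List.mem_cons, List.not_mem_nil] at hnodup
    have hx := hadj x (by simp)
    have hy := hadj y (by simp)
    have hz := hadj z (by simp)
    have hp := hadj p (by simp)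
    have hq := hadj q (by simp)
    have hN' : (x ∈ N ∧ y ∈ N ∧ z ∈ N ∧ p ∉ N ∧ q ∉ N) ∨
        (x ∈ N ∧ y ∈ N ∧ z ∉ N ∧ p ∈ N ∧ q ∉ N) ∨ (x ∈ N ∧ y ∉ N ∧ z ∈ N ∧ p ∈ N ∧ q ∉ N) ∨
        (x ∉ N ∧ y ∈ N ∧ z ∈ N ∧ p ∈ N ∧ q ∉ N) ∨ (x ∈ N ∧ y ∈ N ∧ z ∉ N ∧ p ∉ N ∧ q ∈ N) ∨
        (x ∈ N ∧ y ∉ N ∧ z ∈ N ∧ p ∉ N ∧ q ∈ N) ∨ (x ∉ N ∧ y ∈ N ∧ z ∈ N ∧ p ∉ N ∧ q ∈ N) := by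
      obtain ⟨i, j, k, hij, hik, hjk, rfl⟩ := is3Clique_iff.1 hN
      have := hij.ne; have := hik.ne; have := hjk.ne
      have hi := hNT (show i ∈ _ by simp)
      have hj := hNT (show j ∈ _ by simp)
      have hk := hNT (show k ∈ _ by simp)
      have := G.adj_comm p q
      clear hadj hx hy hz hp hq hNT hmem hT huniv hN hxy hyz hxz hpx hpy hpz hqx hqy hqz
      simp only [Finset.mem_insert, Finset.mem_singleton] at hi hj hk ⊢
      grind (splits := 25)
    have hqp : ¬ G.Adj q p := fun hadj' => hpq hadj'.symm
    rw [← hx, ← hy, ← hz, ← hp, ← hq] at hN'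
    clear hadj hT hN hNT huniv
    rcases hN' with ⟨hx, hy, hz, hp, hq⟩ | ⟨hx, hy, hz, hp, hq⟩ | ⟨hx, hy, hz, hp, hq⟩ |
      ⟨hx, hy, hz, hp, hq⟩ | ⟨hx, hy, hz, hp, hq⟩ | ⟨hx, hy, hz, hp, hq⟩ | ⟨hx, hy, hz, hp, hq⟩
    · refine tau_nu_of_three_apexes hmem ?_ hpq hp hq hxy hyz hxz hpx hpy hqy hqz hx hz
      simp; grind
    · refine tau_nu_of_stacked (x := x) (y := y) (z := z) (p := p) (q := q) (r := r) ?_ ?_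
        hpq hz hq hxy hyz hxz hpx hpy hpz hqx hqz hx hp
      · simpa only [or_comm, or_left_comm] using hmem
      · simp; grind
    · refine tau_nu_of_stacked (x := x) (y := z) (z := y) (p := p) (q := q) (r := r) ?_ ?_
        hpq hy hq hxz hyz.symm hxy hpx hpz hpy hqx hqy hx hp
      · simpa only [or_comm, or_left_comm] using hmem
      · simp; grind
    · refine tau_nu_of_stacked (x := y) (y := z) (z := x) (p := p) (q := q) (r := r) ?_ ?_
        hpq hx hq hyz hxz.symm hxy.symm hpy hpz hpx hqy hqx hy hp
      · simpa only [or_comm, or_left_comm] using hmem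
      · simp; grind
    · refine tau_nu_of_stacked (x := x) (y := y) (z := z) (p := q) (q := p) (r := r) ?_ ?_
        hqp hz hp hxy hyz hxz hqx hqy hqz hpx hpz hx hq
      · simpa only [or_comm, or_left_comm] using hmem
      · simp; grind
    · refine tau_nu_of_stacked (x := x) (y := z) (z := y) (p := q) (q := p) (r := r) ?_ ?_
        hqp hy hp hxz hyz.symm hxy hqx hqz hqy hpx hpy hx hq
      · simpa only [or_comm, or_left_comm] using hmem
      · simp; grind
    · refine tau_nu_of_stacked (x := y) (y := z) (z := x) (p := q) (q := p) (r := r) ?_ ?_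
        hqp hx hp hyz hxz.symm hxy.symm hqy hqz hqx hpy hpx hy hq
      · simpa only [or_comm, or_left_comm] using hmem
      · simp; grind

end SmallCases

/-- Small 3-trees: if `G` is a 3-tree on `4` vertices then `τ(G) = 2` and `ν(G) = 1`;
on `5` vertices `τ(G) = 3` and `ν(G) = 2`; on `6` vertices `τ(G) ≤ 4` and `ν(G) = 3`.
In particular every 3-tree on at most `6` vertices satisfies `τ(G) ≤ (9/5)·ν(G) + 1/5`. -/
theorem small_three_trees (V : Type) [Fintype V] (G : SimpleGraph V) (h3 : Is3Tree G) :
    (Fintype.card V = 4 → tau G = 2 ∧ nu G = 1) ∧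
    (Fintype.card V = 5 → tau G = 3 ∧ nu G = 2) ∧
    (Fintype.card V = 6 → tau G ≤ 4 ∧ nu G = 3) ∧
    (Fintype.card V ≤ 6 → 5 * tau G ≤ 9 * nu G + 1) := by
  classical
  obtain ⟨n, hn⟩ := h3.exists_is3TreeOn_univ
  have hcard : Fintype.card V = n + 3 := hn.card_eq
  rw [hcard]
  refine ⟨fun h => ?_, fun h => ?_, fun h => ?_, fun h => ?_⟩
  · obtain rfl : n = 1 := by omega
    exact tau_nu_of_is3TreeOn_one hn
  · obtain rfl : n = 2 := by omega
    exact tau_nu_of_is3TreeOn_two hn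
  · obtain rfl : n = 3 := by omega
    exact tau_nu_of_is3TreeOn_three hn
  · obtain rfl | rfl | rfl | rfl : n = 0 ∨ n = 1 ∨ n = 2 ∨ n = 3 := by omega
    · have := tau_nu_of_is3TreeOn_zero hn
      omega
    · have := tau_nu_of_is3TreeOn_one hn
      omega
    · have := tau_nu_of_is3TreeOn_two hn
      omega
    · have := tau_nu_of_is3TreeOn_three hn
      omega
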